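/- Let T > 0, (Ω, ℱ, P) a complete probability space with filtration 𝔽 = (ℱ_t)_{t∈[0,T]}, λ Lebesgue measure on [0,T], 𝒢 := {A ∈ ℬ([0,T])⊗ℱ : A_t ∈ ℱ_t for every t ∈ [0,T]}, and ([0,T]×Ω, 𝒢*, μ*) the completion of ([0,T]×Ω, 𝒢, λ×P). Let U ⊆ R^l be a nonempty closed set, L²_𝔽(0,T;R^l) the Banach space of 𝒢-measurable processes with E∫₀^T |y(t)|² dt < ∞, 𝒰_ad := {u ∈ L²_𝔽(0,T;R^l) : u(t,ω) ∈ U for λ×P-a.e. (t,ω)}, ℒ²_𝔽(0,T;R^l) the space of 𝒢*-measurable μ*-square-integrable functions, and 𝒰*_ad := {u ∈ ℒ²_𝔽(0,T;R^l) : u(t,ω) ∈ U for μ*-a.e. (t,ω)}. Let ū ∈ 𝒰_ad and v* ∈ T_{𝒰*_ad}(ū), the adjacent cone of 𝒰*_ad at ū in ℒ²_𝔽(0,T;R^l). Then there exists v ∈ L²_𝔽(0,T;R^l) such that v = v* μ*-almost everywhere and v ∈ T_{𝒰_ad}(ū), the adjacent cone of 𝒰_ad at ū in L²_𝔽(0,T;R^l).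 -/

import Mathlib

/-!
Membership in `𝒢*` is null-measurability for `λ × P` on `𝒢`, so every `𝒢*`-measurable process
agrees almost everywhere with a `𝒢`-measurable one. Passing to such versions preserves `L²`-norms
and almost sure membership in `U`, and a `𝒢`-measurable process has the same norm under `λ × P` and
under its restriction to `𝒢`. If `v` is a version of `v*`, every competitor in `𝒰*_ad` therefore has
a version in `𝒰_ad` at the same distance from `ū + h v`, so the difference quotient defining
`T_{𝒰_ad}(ū)` at `v` is at most the one defining `T_{𝒰*_ad}(ū)` at `v*`.
-/

open MeasureTheory Filter Set
open scoped ENNReal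

/-- The adjacent cone of a set `K` at a point `x`:
`T_K(x) := {v : lim_{h→0⁺} dist(x+hv, K)/h = 0}`. -/
def adjacentCone {X : Type*} [NormedAddCommGroup X] [NormedSpace ℝ X]
    (K : Set X) (x : X) : Set X :=
  {v | Tendsto (fun h : ℝ => Metric.infDist (x + h • v) K / h)
        (nhdsWithin 0 (Set.Ioi 0)) (nhds 0)}

/-- The progressive σ-algebra
`𝒢 := {A ∈ ℬ([0,T]) ⊗ ℱ : A_t ∈ ℱ_t for every t ∈ [0,T]}` on `[0,T] × Ω`. -/
def progSigma (T : ℝ) (Ω : Type*) [mΩ : MeasurableSpace Ω]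
    (F : ℝ → MeasurableSpace Ω) : MeasurableSpace (Set.Icc (0 : ℝ) T × Ω) where
  MeasurableSet' A := MeasurableSet A ∧
    ∀ t : Set.Icc (0 : ℝ) T, MeasurableSet[F t.1] {ω : Ω | (t, ω) ∈ A}
  measurableSet_empty :=
    ⟨MeasurableSet.empty, fun t => by simp⟩
  measurableSet_compl := fun A hA =>
    ⟨hA.1.compl, fun t => by
      have : {ω : Ω | (t, ω) ∈ Aᶜ} = {ω : Ω | (t, ω) ∈ A}ᶜ := rfl
      rw [this]; exact (hA.2 t).compl⟩
  measurableSet_iUnion := fun s hs =>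
    ⟨MeasurableSet.iUnion fun n => (hs n).1, fun t => by
      have : {ω : Ω | (t, ω) ∈ ⋃ n, s n} = ⋃ n, {ω : Ω | (t, ω) ∈ s n} := by
        ext ω; simp
      rw [this]; exact MeasurableSet.iUnion fun n => (hs n).2 t⟩

lemma progSigma_le (T : ℝ) (Ω : Type*) [mΩ : MeasurableSpace Ω]
    (F : ℝ → MeasurableSpace Ω) :
    progSigma T Ω F ≤ (inferInstance : MeasurableSpace (Set.Icc (0 : ℝ) T × Ω)) :=
  fun _ hA => hA.1

/-- Lebesgue measure on `[0, T]`, viewed as a subtype of `ℝ`. -/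
noncomputable def lebIcc (T : ℝ) : Measure (Set.Icc (0 : ℝ) T) :=
  Measure.comap Subtype.val volume

/-- The measure `λ × P`, regarded as a measure on the progressive σ-algebra `𝒢`. -/
noncomputable def nuG (T : ℝ) (Ω : Type*) [mΩ : MeasurableSpace Ω]
    (F : ℝ → MeasurableSpace Ω) (P : Measure Ω) :
    @Measure (Set.Icc (0 : ℝ) T × Ω) (progSigma T Ω F) :=
  ((lebIcc T).prod P).trim (progSigma_le T Ω F)

/-- The completion `𝒮*` of a σ-algebra `𝒮` under a measure `μ`: all sets `A` with
`E ⊆ A ⊆ F`, `E, F ∈ 𝒮` and `μ(F \ E) = 0`. -/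
def completionSets {α : Type*} (m : MeasurableSpace α) (μ : @Measure α m) :
    Set (Set α) :=
  {A : Set α | ∃ E F : Set α, MeasurableSet[m] E ∧ MeasurableSet[m] F ∧
    E ⊆ A ∧ A ⊆ F ∧ μ (F \ E) = 0}

/-- A function on `[0,T] × Ω` is `𝒢*`-measurable if preimages of Borel sets belong to
the completion `𝒢*` of `𝒢` under `λ × P`. -/
def starMeasurable (T : ℝ) (Ω : Type*) [mΩ : MeasurableSpace Ω]
    (F : ℝ → MeasurableSpace Ω) (P : Measure Ω) {l : ℕ}
    (u : Set.Icc (0 : ℝ) T × Ω → EuclideanSpace ℝ (Fin l)) : Prop :=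
  ∀ B : Set (EuclideanSpace ℝ (Fin l)), MeasurableSet B →
    u ⁻¹' B ∈ completionSets (progSigma T Ω F) (nuG T Ω F P)

/-- The space `ℒ²_𝔽(0,T;ℝ^l)` of `𝒢*`-measurable, `μ*`-square-integrable functions. -/
def L2Star (T : ℝ) (Ω : Type*) [mΩ : MeasurableSpace Ω]
    (F : ℝ → MeasurableSpace Ω) (P : Measure Ω) (l : ℕ) :
    Set (Set.Icc (0 : ℝ) T × Ω → EuclideanSpace ℝ (Fin l)) :=
  {v | starMeasurable T Ω F P v ∧ eLpNorm v 2 (nuG T Ω F P) < ⊤}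

/-- The admissible set `𝒰*_ad := {u ∈ ℒ²_𝔽 : u(t,ω) ∈ U, μ*-a.e.}`. -/
def UadStar (T : ℝ) (Ω : Type*) [mΩ : MeasurableSpace Ω]
    (F : ℝ → MeasurableSpace Ω) (P : Measure Ω) {l : ℕ}
    (U : Set (EuclideanSpace ℝ (Fin l))) :
    Set (Set.Icc (0 : ℝ) T × Ω → EuclideanSpace ℝ (Fin l)) :=
  {u ∈ L2Star T Ω F P l | ∀ᵐ p ∂(nuG T Ω F P), u p ∈ U}

/-- The adjacent cone, at `u`, of a subset `S` of a function space `W`, with respect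
to the `L²(μ)`-distance: `{v ∈ W : lim_{h→0⁺} dist_{L²}(u + h v, S)/h = 0}`. -/
def adjacentConeL2 {α E : Type*} {mα : MeasurableSpace α} (μ : Measure α)
    [NormedAddCommGroup E] [NormedSpace ℝ E]
    (W S : Set (α → E)) (u : α → E) : Set (α → E) :=
  {v ∈ W | Tendsto
    (fun h : ℝ =>
      (⨅ g ∈ S, eLpNorm (fun p => (u p + h • v p) - g p) 2 μ) / ENNReal.ofReal h)
    (nhdsWithin 0 (Set.Ioi 0)) (nhds 0)}


/-- The space `L²_𝔽(0,T;ℝ^l)` of `𝒢`-measurable processes `y` with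
`E ∫₀ᵀ |y(t)|² dt < ∞`, as a set of functions on `[0,T] × Ω`. -/
def L2Adapted (T : ℝ) (Ω : Type*) [mΩ : MeasurableSpace Ω]
    (F : ℝ → MeasurableSpace Ω) (P : Measure Ω) (l : ℕ) :
    Set (Set.Icc (0 : ℝ) T × Ω → EuclideanSpace ℝ (Fin l)) :=
  {y | Measurable[progSigma T Ω F] y ∧ eLpNorm y 2 ((lebIcc T).prod P) < ⊤}

/-- The admissible set `𝒰_ad := {u ∈ L²_𝔽 : u(t,ω) ∈ U, λ×P-a.e.}`. -/
def Uad (T : ℝ) (Ω : Type*) [mΩ : MeasurableSpace Ω]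
    (F : ℝ → MeasurableSpace Ω) (P : Measure Ω) {l : ℕ}
    (U : Set (EuclideanSpace ℝ (Fin l))) :
    Set (Set.Icc (0 : ℝ) T × Ω → EuclideanSpace ℝ (Fin l)) :=
  {u ∈ L2Adapted T Ω F P l | ∀ᵐ p ∂((lebIcc T).prod P), u p ∈ U}

theorem mem_completionSets_iff_nullMeasurableSet {α : Type*} {m : MeasurableSpace α}
    {μ : Measure α} {A : Set α} : A ∈ completionSets m μ ↔ NullMeasurableSet A μ := by
  constructor
  · rintro ⟨E, G, hE, -, hEA, hAG, hGE⟩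
    have hAE : A ≤ᵐ[μ] E := ae_le_set.2 (measure_mono_null (sdiff_subset_sdiff_left hAG) hGE)
    exact hE.nullMeasurableSet.congr (hEA.eventuallyLE.antisymm hAE)
  · intro hA
    obtain ⟨E, hEA, hE, hE_ae⟩ := hA.exists_measurable_subset_ae_eq
    obtain ⟨G, hAG, hG, hG_ae⟩ := hA.exists_measurable_superset_ae_eq
    exact ⟨E, G, hE, hG, hEA, hAG, ae_le_set.1 (hG_ae.trans hE_ae.symm).le⟩

section Trim

variable {α E : Type*} {m m₀ : MeasurableSpace α} {μ : Measure[m₀] α} [NormedAddCommGroup E]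

theorem eLpNorm_eq_eLpNorm_trim_of_ae_eq (hm : m ≤ m₀) {p : ℝ≥0∞} {f f' : α → E}
    (hf : StronglyMeasurable[m] f) (hff' : f =ᵐ[μ.trim hm] f') :
    eLpNorm f p μ = eLpNorm f' p (μ.trim hm) :=
  (eLpNorm_trim hm hf).symm.trans (eLpNorm_congr_ae hff')

theorem iInf_eLpNorm_sub_le_iInf_eLpNorm_sub_trim (hm : m ≤ m₀) {p : ℝ≥0∞} {f f' : α → E}
    {S S' : Set (α → E)} (hf : StronglyMeasurable[m] f) (hff' : f =ᵐ[μ.trim hm] f')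
    (hS : ∀ g' ∈ S', ∃ g ∈ S, StronglyMeasurable[m] g ∧ g =ᵐ[μ.trim hm] g') :
    ⨅ g ∈ S, eLpNorm (fun x => f x - g x) p μ ≤
      ⨅ g' ∈ S', eLpNorm (fun x => f' x - g' x) p (μ.trim hm) := by
  refine iInf₂_mono' fun g' hg' => ?_
  obtain ⟨g, hgS, hg, hgg'⟩ := hS g' hg'
  exact ⟨g, hgS, (eLpNorm_eq_eLpNorm_trim_of_ae_eq hm (hf.sub hg) (hff'.sub hgg')).le⟩

theorem mem_adjacentConeL2_of_ae_eq_trim [NormedSpace ℝ E] (hm : m ≤ m₀) {u v v' : α → E}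
    {W S W' S' : Set (α → E)} (hu : StronglyMeasurable[m] u) (hv : StronglyMeasurable[m] v)
    (hvW : v ∈ W) (hvv' : v =ᵐ[μ.trim hm] v')
    (hS : ∀ g' ∈ S', ∃ g ∈ S, StronglyMeasurable[m] g ∧ g =ᵐ[μ.trim hm] g')
    (hv' : v' ∈ adjacentConeL2 (μ.trim hm) W' S' u) :
    v ∈ adjacentConeL2 μ W S u := by
  refine ⟨hvW, tendsto_of_tendsto_of_tendsto_of_le_of_le tendsto_const_nhds hv'.2
    (fun _ => zero_le) fun h => ENNReal.div_le_div_right ?_ _⟩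
  exact iInf_eLpNorm_sub_le_iInf_eLpNorm_sub_trim hm (hu.add (hv.const_smul h))
    ((EventuallyEq.refl _ u).add (hvv'.const_smul h)) hS

end Trim

section Progressive

variable {T : ℝ} {Ω : Type*} [MeasurableSpace Ω] {F : ℝ → MeasurableSpace Ω}
  {P : Measure Ω} {l : ℕ}

theorem starMeasurable_iff_aemeasurable {u : Icc (0 : ℝ) T × Ω → EuclideanSpace ℝ (Fin l)} :
    starMeasurable T Ω F P u ↔ AEMeasurable[progSigma T Ω F] u (nuG T Ω F P) := by
  simp only [starMeasurable, mem_completionSets_iff_nullMeasurableSet]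
  exact ⟨NullMeasurable.aemeasurable, AEMeasurable.nullMeasurable⟩

theorem exists_mem_L2Adapted_ae_eq {v' : Icc (0 : ℝ) T × Ω → EuclideanSpace ℝ (Fin l)}
    (hv' : v' ∈ L2Star T Ω F P l) :
    ∃ v ∈ L2Adapted T Ω F P l, v =ᵐ[nuG T Ω F P] v' := by
  obtain ⟨v, hv, hv'v⟩ := starMeasurable_iff_aemeasurable.1 hv'.1
  have hnorm : eLpNorm v 2 ((lebIcc T).prod P) = eLpNorm v' 2 (nuG T Ω F P) :=
    eLpNorm_eq_eLpNorm_trim_of_ae_eq (progSigma_le T Ω F) hv.stronglyMeasurable hv'v.symm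
  exact ⟨v, ⟨hv, hnorm.trans_lt hv'.2⟩, hv'v.symm⟩

theorem exists_mem_Uad_ae_eq {U : Set (EuclideanSpace ℝ (Fin l))}
    {u' : Icc (0 : ℝ) T × Ω → EuclideanSpace ℝ (Fin l)} (hu' : u' ∈ UadStar T Ω F P U) :
    ∃ u ∈ Uad T Ω F P U, u =ᵐ[nuG T Ω F P] u' := by
  obtain ⟨u, hu, huu'⟩ := exists_mem_L2Adapted_ae_eq hu'.1
  have huU : ∀ᵐ p ∂(nuG T Ω F P), u p ∈ U := by
    filter_upwards [huu', hu'.2] with p hp hpU using hp ▸ hpU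
  exact ⟨u, ⟨hu, ae_of_ae_trim (progSigma_le T Ω F) huU⟩, huu'⟩

theorem adjacentCone_star_reduces_to_adapted_general {U : Set (EuclideanSpace ℝ (Fin l))}
    {ubar vstar : Icc (0 : ℝ) T × Ω → EuclideanSpace ℝ (Fin l)}
    (hubar : Measurable[progSigma T Ω F] ubar)
    (hvstar : vstar ∈ adjacentConeL2 (nuG T Ω F P)
      (L2Star T Ω F P l) (UadStar T Ω F P U) ubar) :
    ∃ v ∈ L2Adapted T Ω F P l,
      (∀ᵐ p ∂(nuG T Ω F P), v p = vstar p) ∧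
      v ∈ adjacentConeL2 ((lebIcc T).prod P)
        (L2Adapted T Ω F P l) (Uad T Ω F P U) ubar := by
  obtain ⟨v, hv, hvv⟩ := exists_mem_L2Adapted_ae_eq hvstar.1
  refine ⟨v, hv, hvv, mem_adjacentConeL2_of_ae_eq_trim (progSigma_le T Ω F)
    hubar.stronglyMeasurable hv.1.stronglyMeasurable hv hvv (fun g' hg' => ?_) hvstar⟩
  obtain ⟨g, hg, hgg'⟩ := exists_mem_Uad_ae_eq hg'
  exact ⟨g, hg, hg.1.1.stronglyMeasurable, hgg'⟩

end Progressive

/-- Every element `v*` of the adjacent cone `T_{𝒰*_ad}(ū)` (taken in the completed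
space `ℒ²_𝔽`) admits a `𝒢`-measurable version `v ∈ L²_𝔽` with `v = v*` `μ*`-a.e.
which belongs to the adjacent cone `T_{𝒰_ad}(ū)` in `L²_𝔽`. -/
theorem adjacentCone_star_reduces_to_adapted
    (T : ℝ) (hT : 0 < T) {Ω : Type*} [mΩ : MeasurableSpace Ω]
    (P : Measure Ω) [IsProbabilityMeasure P] (hPc : P.IsComplete)
    (F : ℝ → MeasurableSpace Ω)
    (hFle : ∀ t : ℝ, F t ≤ mΩ)
    (hFmono : ∀ s t : ℝ, s ≤ t → F s ≤ F t)
    {l : ℕ} (U : Set (EuclideanSpace ℝ (Fin l))) (hUcl : IsClosed U)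
    (hUne : U.Nonempty)
    (ubar : Set.Icc (0 : ℝ) T × Ω → EuclideanSpace ℝ (Fin l))
    (hubar : ubar ∈ Uad T Ω F P U)
    (vstar : Set.Icc (0 : ℝ) T × Ω → EuclideanSpace ℝ (Fin l))
    (hvstar : vstar ∈ adjacentConeL2 (nuG T Ω F P)
        (L2Star T Ω F P l) (UadStar T Ω F P U) ubar) :
    ∃ v ∈ L2Adapted T Ω F P l,
      (∀ᵐ p ∂(nuG T Ω F P), v p = vstar p) ∧
      v ∈ adjacentConeL2 ((lebIcc T).prod P)
        (L2Adapted T Ω F P l) (Uad T Ω F P U) ubar :=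
  adjacentCone_star_reduces_to_adapted_general hubar.1.1 hvstar
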